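/- If 1 ≤ η ≤ n-2, 0 ≤ ε < t and n ≤ (q^{t(n-η)} - 1)/(q^t - 1), then there exists a (k,k-t)-sunflower {π₁,...,πₙ} with dim S + dim I = 2k + (n-2)t - ηt + ε. -/

import Mathlib

open Module

/-!
Let `K` be an extension of `F` of degree `t`. The points of the projective space of `K ^ (n - η)`
are pairwise disjoint `t`-dimensional `F`-spaces, and `n - η < n` of them already span. Hence one
of the others is free to be tilted: replacing it by the graph of a linear map onto `F ^ ε` keeps
the family pairwise disjoint and raises the dimension of the span by exactly `ε`. The preimages
under a linear surjection with `(k - t)`-dimensional kernel form the sunflower, with that kernel as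
its center.
-/

open Function
open scoped LinearAlgebra.Projectivization

section LinearMap

variable {F V W : Type*} [DivisionRing F] [AddCommGroup V] [Module F V] [AddCommGroup W]
  [Module F W]

lemma exists_linearMap_surjective_of_finrank_le [Module.Finite F V] [Module.Finite F W]
    (h : finrank F W ≤ finrank F V) : ∃ p : V →ₗ[F] W, Surjective p := by
  obtain ⟨f, hf⟩ := finrank_le_iff_exists_linearMap.mp h
  obtain ⟨p, hp⟩ := f.exists_leftInverse_of_injective (LinearMap.ker_eq_bot.mpr hf)
  exact ⟨p, LeftInverse.surjective (LinearMap.congr_fun hp)⟩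

lemma exists_linearMap_image_eq_univ_of_finrank_le [Module.Finite F V] [Module.Finite F W]
    (p : Submodule F V) (h : finrank F W ≤ finrank F p) :
    ∃ φ : V →ₗ[F] W, φ '' p = Set.univ := by
  obtain ⟨g, hg⟩ := exists_linearMap_surjective_of_finrank_le h
  obtain ⟨φ, rfl⟩ := LinearMap.exists_extend g
  refine ⟨φ, Set.eq_univ_of_forall fun y ↦ ?_⟩
  obtain ⟨x, rfl⟩ := hg y
  exact ⟨x, x.2, rfl⟩

lemma finrank_comap_of_surjective [Module.Finite F V] {p : V →ₗ[F] W} (hp : Surjective p)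
    (N : Submodule F W) :
    finrank F (N.comap p) = finrank F N + finrank F (LinearMap.ker p) := by
  let g : N.comap p →ₗ[F] W := p.domRestrict (N.comap p)
  have hrange : LinearMap.range g = N := by
    rw [LinearMap.range_domRestrict, Submodule.map_comap_eq_of_surjective hp]
  have hker : finrank F (LinearMap.ker g) = finrank F (LinearMap.ker p) := by
    rw [LinearMap.ker_domRestrict]
    exact (Submodule.comapSubtypeEquivOfLe (LinearMap.ker_le_comap p)).finrank_eq
  rw [← g.finrank_range_add_finrank_ker, hrange, hker]

lemma iSup_comap_eq_top_of_surjective {ι : Sort*} [Nonempty ι] {p : V →ₗ[F] W} (hp : Surjective p)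
    {N : ι → Submodule F W} (hN : ⨆ i, N i = ⊤) : ⨆ i, (N i).comap p = ⊤ := by
  have hker : LinearMap.ker p ≤ ⨆ i, (N i).comap p :=
    (LinearMap.ker_le_comap p).trans (le_iSup (fun i ↦ (N i).comap p) (Classical.arbitrary ι))
  rw [← Submodule.comap_map_eq_self hker, Submodule.map_iSup]
  simp_rw [Submodule.map_comap_eq_of_surjective hp]
  rw [hN, Submodule.comap_top]

end LinearMap

/-- A sunflower with center `C`: a family of `k`-dimensional subspaces, any two of which meet
exactly in the `c`-dimensional subspace `C`. In the notation of the paper it is a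
`(k, c)`-sunflower. -/
structure IsSunflower {F V ι : Type*} [DivisionRing F] [AddCommGroup V] [Module F V] (k c : ℕ)
    (π : ι → Submodule F V) (C : Submodule F V) : Prop where
  finrank_eq : ∀ i, finrank F (π i) = k
  finrank_center : finrank F C = c
  inf_eq : Pairwise fun i j ↦ π i ⊓ π j = C

namespace IsSunflower

variable {F V ι : Type*} [DivisionRing F] [AddCommGroup V] [Module F V] {k c : ℕ}
  {π : ι → Submodule F V} {C : Submodule F V}

lemma injective (h : IsSunflower k c π C) (hkc : k ≠ c) : Injective π := by
  intro i j hij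
  by_contra hne
  have hC : π i = C := by rw [← h.inf_eq hne, ← hij, inf_idem]
  exact hkc (by rw [← h.finrank_eq i, hC, h.finrank_center])

lemma iSup_inf_eq [LinearOrder ι] [Nontrivial ι] (h : IsSunflower k c π C) :
    ⨆ i, ⨆ j, ⨆ (_ : i < j), π i ⊓ π j = C := by
  obtain ⟨i, j, hij⟩ := exists_pair_lt ι
  refine le_antisymm (iSup_le fun i ↦ iSup₂_le fun j hij ↦ (h.inf_eq hij.ne).le) ?_
  rw [← h.inf_eq hij.ne]
  exact le_iSup_of_le i (le_iSup₂_of_le j hij le_rfl)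

end IsSunflower

/-- A partial `t`-spread: a family of `t`-dimensional subspaces, any two of which intersect
trivially. -/
structure IsPartialSpread {F V ι : Type*} [DivisionRing F] [AddCommGroup V] [Module F V] (t : ℕ)
    (L : ι → Submodule F V) : Prop where
  finrank_eq : ∀ i, finrank F (L i) = t
  disjoint : Pairwise (Disjoint on L)

namespace IsPartialSpread

variable {F V W ι : Type*} [DivisionRing F] [AddCommGroup V] [Module F V] [AddCommGroup W]
  [Module F W] {t : ℕ} {L : ι → Submodule F V}

lemma comp_injective {κ : Type*} {f : κ → ι} (hL : IsPartialSpread t L) (hf : Injective f) :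
    IsPartialSpread t (L ∘ f) where
  finrank_eq i := hL.finrank_eq (f i)
  disjoint := hL.disjoint.comp_of_injective hf

lemma comap [Module.Finite F W] (hL : IsPartialSpread t L) {p : W →ₗ[F] V} (hp : Surjective p) :
    IsSunflower (t + finrank F (LinearMap.ker p)) (finrank F (LinearMap.ker p))
      (fun i ↦ (L i).comap p) (LinearMap.ker p) where
  finrank_eq i := by rw [finrank_comap_of_surjective hp, hL.finrank_eq]
  finrank_center := rfl
  inf_eq i j hij := by
    beta_reduce
    rw [← Submodule.comap_inf, (hL.disjoint hij).eq_bot, Submodule.comap_bot]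

lemma exists_isSunflower [Module.Finite F V] [Nonempty ι] (hL : IsPartialSpread t L)
    (hspan : ⨆ i, L i = ⊤) (c : ℕ) :
    ∃ (π : ι → Submodule F (Fin (finrank F V + c) → F))
      (C : Submodule F (Fin (finrank F V + c) → F)),
      IsSunflower (t + c) c π C ∧ ⨆ i, π i = ⊤ := by
  obtain ⟨p, hp⟩ : ∃ p : (Fin (finrank F V + c) → F) →ₗ[F] V, Surjective p :=
    exists_linearMap_surjective_of_finrank_le (by simp)
  have hker : finrank F (LinearMap.ker p) = c := by
    have := p.finrank_range_add_finrank_ker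
    rwa [LinearMap.range_eq_top.mpr hp, finrank_top, finrank_fin_fun, add_right_inj] at this
  have hsun := hL.comap hp
  rw [hker] at hsun
  exact ⟨_, _, hsun, iSup_comap_eq_top_of_surjective hp hspan⟩

lemma map_id_prod (hL : IsPartialSpread t L) (ψ : ι → V →ₗ[F] W) :
    IsPartialSpread t fun i ↦ (L i).map (LinearMap.id.prod (ψ i)) where
  finrank_eq i := by
    have hinj : Injective (LinearMap.id.prod (ψ i)) := fun _ _ h ↦ congrArg Prod.fst h
    rw [← hL.finrank_eq i, (Submodule.equivMapOfInjective _ hinj (L i)).finrank_eq]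
  disjoint i j hij := by
    rw [onFun, Submodule.disjoint_def]
    rintro _ ⟨x, hx, rfl⟩ ⟨y, hy, hyx⟩
    obtain rfl : y = x := congrArg Prod.fst hyx
    rw [Submodule.disjoint_def.mp (hL.disjoint hij) y hx hy, map_zero]

lemma exists_prod_iSup_eq_top [Module.Finite F V] [Module.Finite F W] (hL : IsPartialSpread t L)
    (i₀ : ι) (hspan : ⨆ i ≠ i₀, L i = ⊤) (hW : finrank F W ≤ t) :
    ∃ L' : ι → Submodule F (V × W), IsPartialSpread t L' ∧ ⨆ i, L' i = ⊤ := by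
  classical
  obtain ⟨φ, hφ⟩ := exists_linearMap_image_eq_univ_of_finrank_le (W := W) (L i₀)
    (by rwa [hL.finrank_eq])
  let ψ : ι → V →ₗ[F] W := Pi.single i₀ φ
  let L' : ι → Submodule F (V × W) := fun i ↦ (L i).map (LinearMap.id.prod (ψ i))
  have mem_iSup {i : ι} {x : V} (hx : x ∈ L i) : (x, ψ i x) ∈ ⨆ i, L' i :=
    Submodule.mem_iSup_of_mem i (Submodule.mem_map_of_mem hx)
  have hinl (x : V) : (x, 0) ∈ ⨆ i, L' i := by
    have hle : ⨆ i ≠ i₀, L i ≤ (⨆ i, L' i).comap (LinearMap.inl F V W) :=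
      iSup₂_le fun i hi x hx ↦ by simpa [ψ, Pi.single_eq_of_ne hi] using mem_iSup hx
    exact hle (hspan ▸ Submodule.mem_top)
  refine ⟨L', hL.map_id_prod ψ, eq_top_iff.mpr fun ⟨x, y⟩ _ ↦ ?_⟩
  obtain ⟨x₀, hx₀, rfl⟩ : y ∈ φ '' L i₀ := hφ ▸ Set.mem_univ y
  simpa [ψ] using add_mem (hinl (x - x₀)) (mem_iSup hx₀)

end IsPartialSpread

section Projectivization

variable {K V : Type*} [DivisionRing K] [AddCommGroup V] [Module K V]

lemma disjoint_projectivization_submodule {v w : ℙ K V} (h : v ≠ w) :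
    Disjoint v.submodule w.submodule :=
  (Submodule.isAtom_iff_finrank_eq_one.mpr v.finrank_submodule).disjoint_of_ne
    (Submodule.isAtom_iff_finrank_eq_one.mpr w.finrank_submodule)
    (Projectivization.submodule_injective.ne h)

/-- The Desarguesian spread, obtained by field reduction. -/
lemma isPartialSpread_restrictScalars_submodule (F : Type*) [DivisionRing F] [Module F K]
    [Module F V] [IsScalarTower F K V] :
    IsPartialSpread (finrank F K) fun v : ℙ K V ↦ v.submodule.restrictScalars F where
  finrank_eq v :=
    calc finrank F v.submodule = finrank F K * finrank K v.submodule :=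
          (finrank_mul_finrank F K v.submodule).symm
      _ = finrank F K := by rw [v.finrank_submodule, mul_one]
  disjoint v w hvw := by
    rw [onFun, disjoint_iff, ← Submodule.restrictScalars_inf,
      (disjoint_projectivization_submodule hvw).eq_bot, Submodule.restrictScalars_bot]

lemma projectivization_mk_injective {ι : Type*} {v : ι → V} (hv : LinearIndependent K v) :
    Injective fun i ↦ Projectivization.mk K (v i) (hv.ne_zero i) := by
  intro i j hij
  obtain ⟨a, ha⟩ := (Projectivization.mk_eq_mk_iff' ..).mp hij
  exact hv.eq_of_smul_apply_eq_smul_apply 1 a i j one_ne_zero (by rw [one_smul, ha])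

lemma exists_embedding_projectivization_iSup_ne_eq_top [Module.Finite K V] {n : ℕ}
    (hn : finrank K V < n) (hcard : n ≤ ENat.card (ℙ K V)) :
    ∃ (f : Fin n ↪ ℙ K V) (i₀ : Fin n), ⨆ i ≠ i₀, (f i).submodule = ⊤ := by
  let b := finBasis K V
  let e : Fin (finrank K V) ↪ ℙ K V := ⟨_, projectivization_mk_injective b.linearIndependent⟩
  obtain ⟨f, hf⟩ := Fin.Embedding.restrictSurjective_of_le_ENatCard hn.le hcard e
  refine ⟨f, ⟨finrank K V, hn⟩, eq_top_iff.mpr ?_⟩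
  rw [← b.span_eq, Submodule.span_le]
  rintro _ ⟨j, rfl⟩
  have hj : b j ∈ (f (Fin.castLE hn.le j)).submodule := by
    have : f (Fin.castLE hn.le j) = e j := DFunLike.congr_fun hf j
    rw [this]
    exact (Projectivization.submodule_mk _ (b.ne_zero j)).ge (Submodule.mem_span_singleton_self _)
  exact Submodule.mem_iSup_of_mem _ (Submodule.mem_iSup_of_mem (Fin.ne_of_lt j.2) hj)

lemma enatCard_projectivization_fin_fun (F K : Type*) [Field F] [Finite F] [Field K] [Module F K]
    [Module.Finite F K] (s : ℕ) :
    ENat.card (ℙ K (Fin s → K)) =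
      ((Nat.card F ^ (finrank F K * s) - 1) / (Nat.card F ^ finrank F K - 1) : ℕ) := by
  have : Finite K := Module.finite_of_finite F
  rw [ENat.card_eq_coe_natCard, Projectivization.card'', Nat.card_fun, Nat.card_fin,
    natCard_eq_pow_finrank (K := F) (V := K), pow_mul]

end Projectivization

lemma exists_field_extension_finrank_eq (F : Type*) [Field F] [Finite F] {t : ℕ} (ht : t ≠ 0) :
    ∃ (K : Type) (_ : Field K) (_ : Algebra F K), Module.Finite F K ∧ finrank F K = t := by
  obtain ⟨p, _⟩ := CharP.exists F
  have : Fact p.Prime := ⟨CharP.char_is_prime F p⟩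
  have : NeZero t := ⟨ht⟩
  exact ⟨FiniteField.Extension F p t, inferInstance, inferInstance, inferInstance,
    FiniteField.finrank_extension F p t⟩

theorem exists_isSunflower_finrank_iSup_eq (F K : Type*) [DivisionRing F] [DivisionRing K]
    [Module F K] [IsScalarTower F K K] [Module.Finite F K] {n s : ℕ} (c : ℕ) {ε : ℕ} (hs : s < n)
    (hε : ε ≤ finrank F K) (hcard : n ≤ ENat.card (ℙ K (Fin s → K))) :
    ∃ (m : ℕ) (π : Fin n → Submodule F (Fin m → F)) (C : Submodule F (Fin m → F)),
      IsSunflower (finrank F K + c) c π C ∧ finrank F ↥(⨆ i, π i) = s * finrank F K + ε + c := by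
  obtain ⟨f, i₀, hspan⟩ := exists_embedding_projectivization_iSup_ne_eq_top (by simpa) hcard
  let L (i : Fin n) : Submodule F (Fin s → K) := (f i).submodule.restrictScalars F
  have hL : IsPartialSpread (finrank F K) L :=
    (isPartialSpread_restrictScalars_submodule F).comp_injective f.injective
  have hLspan : ⨆ i ≠ i₀, L i = ⊤ := by
    simp_rw [L, ← Submodule.restrictScalars_iSup, hspan, Submodule.restrictScalars_top]
  obtain ⟨L', hL', hL'span⟩ :=
    hL.exists_prod_iSup_eq_top (W := Fin ε → F) i₀ hLspan (by simpa)
  have : Nonempty (Fin n) := ⟨i₀⟩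
  obtain ⟨π, C, hπ, hπspan⟩ := hL'.exists_isSunflower hL'span c
  refine ⟨_, π, C, hπ, ?_⟩
  rw [hπspan, finrank_top, finrank_fin_fun, finrank_prod, finrank_pi_fintype, finrank_fin_fun]
  simp

theorem sunflower_spectrum_exists_eps_general (F K : Type*) [DivisionRing F] [DivisionRing K]
    [Module F K] [IsScalarTower F K K] [Module.Finite F K] (n k η ε : ℕ) (htk : finrank F K ≤ k)
    (hη₁ : 1 ≤ η) (hη₂ : η ≤ n - 2) (hε : ε ≤ finrank F K)
    (hcard : n ≤ ENat.card (ℙ K (Fin (n - η) → K))) :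
    ∃ (m : ℕ) (π : Fin n → Submodule F (Fin m → F)) (C : Submodule F (Fin m → F)),
      Injective π ∧
      (∀ i, finrank F ↥(π i) = k) ∧
      finrank F ↥C = k - finrank F K ∧
      (∀ i j, i ≠ j → π i ⊓ π j = C) ∧
      finrank F ↥(⨆ i, π i) +
        finrank F ↥(⨆ i, ⨆ j, ⨆ (_ : i < j), π i ⊓ π j) =
          2 * k + (n - 2) * finrank F K - η * finrank F K + ε := by
  obtain ⟨c, rfl⟩ := Nat.exists_eq_add_of_le htk
  obtain ⟨d, rfl⟩ : ∃ d, n = η + d + 2 := ⟨n - 2 - η, by omega⟩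
  obtain ⟨m, π, C, hπ, hS⟩ := exists_isSunflower_finrank_iSup_eq F K c (by omega) hε hcard
  have ht : 0 < finrank F K := finrank_pos
  refine ⟨m, π, C, hπ.injective (by omega), hπ.finrank_eq, ?_, hπ.inf_eq, ?_⟩
  · rw [hπ.finrank_center, Nat.add_sub_cancel_left]
  · have hs : η + d + 2 - η = d + 2 := by omega
    rw [hπ.iSup_inf_eq, hπ.finrank_center, hS, hs, Nat.add_sub_cancel, add_mul, add_mul]
    omega

theorem sunflower_spectrum_exists_eps (F : Type*) [Field F] [Fintype F]
    (n k t η ε : ℕ) (hn : 3 ≤ n) (ht : 1 ≤ t) (htk : t ≤ k)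
    (hη₁ : 1 ≤ η) (hη₂ : η ≤ n - 2) (hε : ε < t)
    (hcard : n ≤ ((Fintype.card F) ^ (t * (n - η)) - 1) / ((Fintype.card F) ^ t - 1)) :
    ∃ (m : ℕ) (π : Fin n → Submodule F (Fin m → F)) (C : Submodule F (Fin m → F)),
      Function.Injective π ∧
      (∀ i, finrank F ↥(π i) = k) ∧
      finrank F ↥C = k - t ∧
      (∀ i j, i ≠ j → π i ⊓ π j = C) ∧
      finrank F ↥(⨆ i, π i) +
        finrank F ↥(⨆ i, ⨆ j, ⨆ (_ : i < j), π i ⊓ π j) =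
          2 * k + (n - 2) * t - η * t + ε := by
  obtain ⟨K, _, _, _, rfl⟩ := exists_field_extension_finrank_eq F (Nat.one_le_iff_ne_zero.mp ht)
  exact sunflower_spectrum_exists_eps_general F K n k η ε htk hη₁ hη₂ hε.le <| by
    rwa [enatCard_projectivization_fin_fun F K, Nat.card_eq_fintype_card, Nat.cast_le]
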